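/- Let ℓ ≥ 2, J ⊆ ℤ/ℓℤ, and let θ ∈ ℂ^(ℤ/ℓℤ) be J-standard with Σ_{i ∈ ℤ/ℓℤ} θ_i ≠ 0. Let ν₁, ν₂ be partitions that are both ℓ-cores and J-cores, and let r₁, r₂ be nonnegative integers. Then (Res_ℓ(ν₁) + r₁·δ_ℓ) − (Res_ℓ(ν₂) + r₂·δ_ℓ) lies in Σ_{j ∈ J} ℕ·e_j (where e_j is the j-th standard basis vector of ℤ^(ℤ/ℓℤ)) if and only if r₁ ≥ r₂ and there exists a partition λ with Core_ℓ(λ) = ν₁, |λ| = |ν₁| + ℓ·(r₁ − r₂), and Core_J(λ) = ν₂. -/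

import Mathlib

namespace CM

/-- The (non-linear) action of the simple reflection `s_j` on `ℤ^(ℤ/ℓℤ)`. -/
def sInt (ℓ : ℕ) (j : ZMod ℓ) (d : ZMod ℓ → ℤ) : ZMod ℓ → ℤ := fun i =>
  if i = j then (if j = 0 then 1 else 0) + d (j + 1) + d (j - 1) - d j else d i

/-- The linear action of the simple reflection `s_j` on `ℂ^(ℤ/ℓℤ)`.
For `i ≠ j` the coefficient of `θ j` is the number of arrows between `i` and `j`
(which is `2` when `ℓ = 2`). -/
def sC (ℓ : ℕ) (j : ZMod ℓ) (θ : ZMod ℓ → ℂ) : ZMod ℓ → ℂ := fun i =>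
  if i = j then -θ j
  else θ i + ((if i = j - 1 then 1 else 0) + (if i = j + 1 then 1 else 0) : ℂ) * θ j

lemma sC_sC (ℓ : ℕ) (j : ZMod ℓ) (θ : ZMod ℓ → ℂ) : sC ℓ j (sC ℓ j θ) = θ := by
  funext i
  by_cases h : i = j
  · subst h; simp [sC]
  · simp [sC, h]

/-- `s_j` as a bijection of `ℂ^(ℤ/ℓℤ)`. -/
def sPerm (ℓ : ℕ) (j : ZMod ℓ) : Equiv.Perm (ZMod ℓ → ℂ) :=
  ⟨sC ℓ j, sC ℓ j, fun θ => sC_sC ℓ j θ, fun θ => sC_sC ℓ j θ⟩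

/-- The group generated by the operators `s_j`, `j ∈ ℤ/ℓℤ`. -/
def Wgrp (ℓ : ℕ) : Subgroup (Equiv.Perm (ZMod ℓ → ℂ)) :=
  Subgroup.closure (Set.range (sPerm ℓ))

/-- The subgroup generated by the operators `s_j`, `j ∈ J`. -/
def WJ (ℓ : ℕ) (J : Set (ZMod ℓ)) : Subgroup (Equiv.Perm (ZMod ℓ → ℂ)) :=
  Subgroup.closure (sPerm ℓ '' J)

/-- `θ` is `J`-standard if its stabilizer in `W` is exactly `W_J`. -/
def JStandard (ℓ : ℕ) (J : Set (ZMod ℓ)) (θ : ZMod ℓ → ℂ) : Prop :=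
  ∀ w ∈ Wgrp ℓ, ((w : (ZMod ℓ → ℂ) → (ZMod ℓ → ℂ)) θ = θ ↔ w ∈ WJ ℓ J)

/-- The `∞`-residue of a box. -/
def rsd (c : ℕ × ℕ) : ℤ := (c.2 : ℤ) - (c.1 : ℤ)

/-- The `ℓ`-residue of a box. -/
def res (ℓ : ℕ) (c : ℕ × ℕ) : ZMod ℓ := (rsd c : ZMod ℓ)

/-- `Res_ℓ(μ) ∈ ℤ^(ℤ/ℓℤ)`: the number of boxes of each `ℓ`-residue. -/
def Res (ℓ : ℕ) (μ : YoungDiagram) : ZMod ℓ → ℤ := fun i =>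
  ((μ.cells.filter (fun c => res ℓ c = i)).card : ℤ)

/-- The constant vector `δ_ℓ = (1,…,1)`. -/
def delta (ℓ : ℕ) : ZMod ℓ → ℤ := fun _ => 1

/-- A box is removable if deleting it leaves a Young diagram. -/
def IsRemovable (μ : YoungDiagram) (c : ℕ × ℕ) : Prop :=
  c ∈ μ.cells ∧ ∃ ν : YoungDiagram, ν.cells = μ.cells.erase c

/-- A box is addable if adjoining it yields a Young diagram. -/
def IsAddable (μ : YoungDiagram) (c : ℕ × ℕ) : Prop :=
  c ∉ μ.cells ∧ ∃ ν : YoungDiagram, ν.cells = insert c μ.cells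

/-- One step: delete one removable box. -/
def RemoveStep (μ ν : YoungDiagram) : Prop :=
  ∃ c, IsRemovable μ c ∧ ν.cells = μ.cells.erase c

/-- `ν` is obtainable from `μ` by successively deleting removable boxes. -/
def Obtainable (μ ν : YoungDiagram) : Prop :=
  Relation.ReflTransGen RemoveStep μ ν

/-- `λ` is an `ℓ`-core: no partition obtainable from `λ` by deleting removable boxes
differs from `λ` by exactly `ℓ` boxes of pairwise distinct `ℓ`-residues. -/
def IsCore (ℓ : ℕ) (lam : YoungDiagram) : Prop :=
  ¬ ∃ μ : YoungDiagram, Obtainable lam μ ∧ (lam.cells \ μ.cells).card = ℓ ∧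
      Set.InjOn (res ℓ) ↑(lam.cells \ μ.cells)

/-- One step of the `ℓ`-core process: delete (via removable-box deletions) `ℓ` boxes
of pairwise distinct `ℓ`-residues. -/
def CoreStep (ℓ : ℕ) (μ ν : YoungDiagram) : Prop :=
  Obtainable μ ν ∧ (μ.cells \ ν.cells).card = ℓ ∧
    Set.InjOn (res ℓ) ↑(μ.cells \ ν.cells)

/-- `ν` is the `ℓ`-core of `λ`: it is an `ℓ`-core reached from `λ` by the core process. -/
def ReachesCore (ℓ : ℕ) (lam ν : YoungDiagram) : Prop :=
  Relation.ReflTransGen (CoreStep ℓ) lam ν ∧ IsCore ℓ ν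

/-- A `J`-removable box: a removable box whose `ℓ`-residue lies in `J`. -/
def IsJRemovable (ℓ : ℕ) (J : Set (ZMod ℓ)) (μ : YoungDiagram) (c : ℕ × ℕ) : Prop :=
  IsRemovable μ c ∧ res ℓ c ∈ J

/-- A `J`-core: a partition with no `J`-removable boxes. -/
def IsJCore (ℓ : ℕ) (J : Set (ZMod ℓ)) (μ : YoungDiagram) : Prop :=
  ∀ c, ¬ IsJRemovable ℓ J μ c

/-- One step: delete one `J`-removable box. -/
def JRemoveStep (ℓ : ℕ) (J : Set (ZMod ℓ)) (μ ν : YoungDiagram) : Prop :=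
  ∃ c, IsJRemovable ℓ J μ c ∧ ν.cells = μ.cells.erase c

/-- `ν` is a `J`-core of `λ`, obtained by successively deleting `J`-removable boxes. -/
def JReaches (ℓ : ℕ) (J : Set (ZMod ℓ)) (lam ν : YoungDiagram) : Prop :=
  Relation.ReflTransGen (JRemoveStep ℓ J) lam ν ∧ IsJCore ℓ J ν

/-! ### Diagonal counts -/

/-- Number of boxes of content `c`. -/
def dN (μ : YoungDiagram) (c : ℤ) : ℕ := (μ.cells.filter (fun x => rsd x = c)).card

lemma dN_mem (μ : YoungDiagram) (a b : ℕ) :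
    (a, b) ∈ μ.cells ↔ min a b < dN μ ((b : ℤ) - a) := by
  set c : ℤ := (b : ℤ) - a with hc
  -- the diagonal indexed by `k`
  have hinj : Set.InjOn (fun x : ℕ × ℕ => min x.1 x.2)
      ↑(μ.cells.filter (fun x => rsd x = c)) := by
    rintro ⟨x1, x2⟩ hx ⟨y1, y2⟩ hy h
    rw [Finset.mem_coe, Finset.mem_filter] at hx hy
    simp only [rsd] at hx hy h
    ext <;> simp only <;> omega
  have hcard := Finset.card_image_of_injOn hinj
  set I := (μ.cells.filter (fun x => rsd x = c)).image (fun x : ℕ × ℕ => min x.1 x.2) with hI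
  have hmem : ∀ k, k ∈ I ↔ (k + (-c).toNat, k + c.toNat) ∈ μ.cells := by
    intro k
    rw [hI, Finset.mem_image]
    simp only [Finset.mem_filter]
    simp only [rsd]
    constructor
    · rintro ⟨⟨x1, x2⟩, ⟨h1, h2⟩, h3⟩
      have : (k + (-c).toNat, k + c.toNat) = (x1, x2) := by
        simp only at h2 h3
        ext <;> simp only <;> omega
      rwa [this]
    · intro h
      refine ⟨_, ⟨h, ?_⟩, ?_⟩
      · simp only; push_cast; omega
      · simp only; omega
  have hlow : ∀ k ∈ I, ∀ j ≤ k, j ∈ I := by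
    intro k hk j hj
    rw [hmem] at *
    exact μ.isLowerSet (Prod.mk_le_mk.2 ⟨by omega, by omega⟩) hk
  have key : I = Finset.range I.card := by
    have hsub : ∀ k ∈ I, k < I.card := by
      intro k hk
      have : Finset.range (k+1) ⊆ I := fun j hj => hlow k hk j (by simp at hj; omega)
      have := Finset.card_le_card this
      simp at this; omega
    exact Finset.eq_of_subset_of_card_le (fun k hk => Finset.mem_range.2 (hsub k hk)) (by simp)
  have hab : (a, b) = (min a b + (-c).toNat, min a b + c.toNat) := by
    ext <;> simp only <;> omega
  rw [hab, ← hmem, key, Finset.mem_range, hcard]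
  rfl

lemma dN_ext {μ ν : YoungDiagram} (h : ∀ c, dN μ c = dN ν c) : μ = ν := by
  apply YoungDiagram.ext
  ext ⟨a, b⟩
  rw [dN_mem, dN_mem, h]

/-- Maya diagram of a partition. -/
def ed (μ : YoungDiagram) (p : ℤ) : ℤ := (if p < 0 then 1 else 0) + dN μ p - dN μ (p + 1)

lemma mem_low {μ : YoungDiagram} {a b a' b' : ℕ} (h : (a, b) ∈ μ.cells) (h1 : a' ≤ a) (h2 : b' ≤ b) :
    (a', b') ∈ μ.cells := μ.isLowerSet (Prod.mk_le_mk.2 ⟨h1, h2⟩) h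

lemma ed_01 (μ : YoungDiagram) (p : ℤ) : ed μ p = 0 ∨ ed μ p = 1 := by
  have hd : ∀ a b : ℕ, ∀ c : ℤ, c = (b : ℤ) - a → ((a, b) ∈ μ.cells ↔ min a b < dN μ c) := by
    intro a b c h; rw [h]; exact dN_mem μ a b
  unfold ed
  set n := dN μ p with hn
  set m := dN μ (p + 1) with hm
  by_cases hp : p < 0
  · -- n ≤ m ≤ n + 1
    obtain ⟨t, ht⟩ : ∃ t : ℕ, p = -((t : ℤ) + 1) := ⟨(-p-1).toNat, by omega⟩
    have h1 : n ≤ m := by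
      by_contra h
      have := (hd (m + t + 1) m p (by push_cast; omega)).2 (by omega)
      have := (hd (m + t) m (p+1) (by push_cast; omega)).1 (mem_low this (by omega) le_rfl)
      omega
    have h2 : m ≤ n + 1 := by
      by_contra h
      have := (hd (n + 1 + t) (n + 1) (p+1) (by push_cast; omega)).2 (by omega)
      have := (hd (n + 1 + t) n p (by push_cast; omega)).1 (mem_low this le_rfl (by omega))
      omega
    simp only [hp, if_true]; omega
  · obtain ⟨t, ht⟩ : ∃ t : ℕ, p = t := ⟨p.toNat, by omega⟩
    have h1 : m ≤ n := by
      by_contra h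
      have := (hd n (n + t + 1) (p+1) (by push_cast; omega)).2 (by omega)
      have := (hd n (n + t) p (by push_cast; omega)).1 (mem_low this le_rfl (by omega))
      omega
    have h2 : n ≤ m + 1 := by
      by_contra h
      have := (hd (m + 1) (m + 1 + t) p (by push_cast; omega)).2 (by omega)
      have := (hd m (m + 1 + t) (p+1) (by push_cast; omega)).1 (mem_low this (by omega) le_rfl)
      omega
    simp only [hp, if_false]; omega

lemma exists_add (μ : YoungDiagram) (c : ℤ) (h1 : ed μ (c - 1) = 1) (h0 : ed μ c = 0) :
    ∃ (ν : YoungDiagram) (x : ℕ × ℕ), x ∉ μ.cells ∧ rsd x = c ∧ ν.cells = insert x μ.cells := by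
  have hd : ∀ a b : ℕ, ∀ c : ℤ, c = (b : ℤ) - a → ((a, b) ∈ μ.cells ↔ min a b < dN μ c) := by
    intro a b c h; rw [h]; exact dN_mem μ a b
  unfold ed at h1 h0
  rw [sub_add_cancel] at h1
  set n := dN μ c with hn
  have hx : (n + (-c).toNat, n + c.toNat) ∉ μ.cells := by
    rw [hd _ _ c (by push_cast; omega)]; omega
  have hup : ∀ a, a + 1 = n + (-c).toNat → (a, n + c.toNat) ∈ μ.cells := by
    intro a ha
    rw [hd _ _ (c + 1) (by push_cast; omega)]
    split_ifs at h1 h0 <;> omega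
  have hleft : ∀ b, b + 1 = n + c.toNat → (n + (-c).toNat, b) ∈ μ.cells := by
    intro b hb
    rw [hd _ _ (c - 1) (by push_cast; omega)]
    split_ifs at h1 h0 <;> omega
  refine ⟨⟨insert (n + (-c).toNat, n + c.toNat) μ.cells, ?_⟩, _, hx, ?_, rfl⟩
  · rintro ⟨y1, y2⟩ ⟨z1, z2⟩ hle hy
    rw [Prod.mk_le_mk] at hle
    simp only [Finset.coe_insert, Set.mem_insert_iff, Finset.mem_coe, Prod.mk.injEq] at hy ⊢
    rcases hy with ⟨rfl, rfl⟩ | hy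
    · by_cases e1 : z1 = n + (-c).toNat
      · by_cases e2 : z2 = n + c.toNat
        · exact Or.inl ⟨e1, e2⟩
        · right
          exact mem_low (hleft (n + c.toNat - 1) (by omega)) (by omega) (by omega)
      · right
        exact mem_low (hup (n + (-c).toNat - 1) (by omega)) (by omega) (by omega)
    · exact Or.inr (mem_low hy hle.1 hle.2)
  · simp only [rsd]; push_cast; omega

lemma exists_rem (μ : YoungDiagram) (c : ℤ) (h1 : ed μ (c - 1) = 0) (h0 : ed μ c = 1) :
    ∃ (ν : YoungDiagram) (x : ℕ × ℕ), x ∈ μ.cells ∧ rsd x = c ∧ ν.cells = μ.cells.erase x := by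
  have hd : ∀ a b : ℕ, ∀ c : ℤ, c = (b : ℤ) - a → ((a, b) ∈ μ.cells ↔ min a b < dN μ c) := by
    intro a b c h; rw [h]; exact dN_mem μ a b
  unfold ed at h1 h0
  rw [sub_add_cancel] at h1
  have hpos : 0 < dN μ c := by split_ifs at h1 h0 <;> omega
  obtain ⟨n, hn⟩ : ∃ n, dN μ c = n + 1 := ⟨dN μ c - 1, by omega⟩
  rw [hn] at h1 h0
  have hx : (n + (-c).toNat, n + c.toNat) ∈ μ.cells := by
    rw [hd _ _ c (by push_cast; omega)]; omega
  have hdown : (n + (-c).toNat + 1, n + c.toNat) ∉ μ.cells := by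
    rw [hd _ _ (c - 1) (by push_cast; omega)]
    split_ifs at h1 h0 <;> omega
  have hright : (n + (-c).toNat, n + c.toNat + 1) ∉ μ.cells := by
    rw [hd _ _ (c + 1) (by push_cast; omega)]
    split_ifs at h1 h0 <;> omega
  refine ⟨⟨μ.cells.erase (n + (-c).toNat, n + c.toNat), ?_⟩, _, hx, ?_, rfl⟩
  · rintro ⟨y1, y2⟩ ⟨z1, z2⟩ hle hy
    rw [Prod.mk_le_mk] at hle
    simp only [Finset.coe_erase, Set.mem_diff, Set.mem_singleton_iff, Finset.mem_coe,
      Prod.mk.injEq] at hy ⊢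
    refine ⟨mem_low hy.1 hle.1 hle.2, ?_⟩
    rintro ⟨rfl, rfl⟩
    by_cases e1 : y1 = n + (-c).toNat
    · exact hright (mem_low hy.1 (by omega) (by have := hy.2; omega))
    · exact hdown (mem_low hy.1 (by omega) (by omega))
  · simp only [rsd]; push_cast; omega

lemma dN_insert {μ ν : YoungDiagram} {x : ℕ × ℕ} (hx : x ∉ μ.cells)
    (h : ν.cells = insert x μ.cells) (c : ℤ) :
    dN ν c = dN μ c + if c = rsd x then 1 else 0 := by
  unfold dN
  rw [h, Finset.filter_insert]
  split_ifs with h1 h2 h2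
  · rw [Finset.card_insert_of_notMem (by simp [hx])]
  · exact absurd h1.symm h2
  · exact absurd h2.symm h1
  · rfl

lemma Res_insert {ℓ : ℕ} {μ ν : YoungDiagram} {x : ℕ × ℕ} (hx : x ∉ μ.cells)
    (h : ν.cells = insert x μ.cells) (i : ZMod ℓ) :
    Res ℓ ν i = Res ℓ μ i + if i = res ℓ x then 1 else 0 := by
  unfold Res
  rw [h, Finset.filter_insert]
  split_ifs with h1 h2 h2
  · rw [Finset.card_insert_of_notMem (by simp [hx])]; push_cast; rfl
  · exact absurd h1.symm h2
  · exact absurd h2.symm h1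
  · simp

lemma insert_of_erase {μ ν : YoungDiagram} {x : ℕ × ℕ} (hx : x ∈ μ.cells)
    (h : ν.cells = μ.cells.erase x) : x ∉ ν.cells ∧ μ.cells = insert x ν.cells := by
  rw [h]; simp [Finset.insert_erase hx]

lemma erase_of_insert {μ ν : YoungDiagram} {x : ℕ × ℕ} (hx : x ∉ μ.cells)
    (h : ν.cells = insert x μ.cells) : x ∈ ν.cells ∧ μ.cells = ν.cells.erase x := by
  rw [h]; simp [Finset.erase_insert hx]

/-! ### Ribbons -/

lemma ribbon (n : ℕ) : ∀ (μ : YoungDiagram) (p : ℤ), ed μ p = 1 → ed μ (p - (n + 1)) = 0 →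
    ∃ ν : YoungDiagram, Obtainable μ ν ∧ ν.cells ⊆ μ.cells ∧
      ∀ c, dN μ c = dN ν c + if p - (n + 1) < c ∧ c ≤ p then 1 else 0 := by
  induction n with
  | zero =>
    intro μ p h1 h0
    obtain ⟨ν, x, hx, hr, hν⟩ := exists_rem μ p (by simpa using h0) h1
    refine ⟨ν, Relation.ReflTransGen.single ⟨x, ⟨hx, ν, hν⟩, hν⟩, ?_, ?_⟩
    · rw [hν]; exact Finset.erase_subset _ _
    · intro c
      obtain ⟨a, b⟩ := insert_of_erase hx hν
      rw [dN_insert a b c, hr]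
      congr 1
      apply if_congr _ rfl rfl
      push_cast; omega
  | succ n ih =>
    intro μ p h1 h0
    push_cast at h0 ⊢
    rcases ed_01 μ (p - 1) with h | h
    · obtain ⟨μ', x, hx, hr, hν⟩ := exists_rem μ p h h1
      obtain ⟨a, b⟩ := insert_of_erase hx hν
      have hN := dN_insert a b
      rw [hr] at hN
      obtain ⟨ν, o, s, hc⟩ := ih μ' (p - 1) (by
          have e1 := hN (p - 1); have e2 := hN (p - 1 + 1)
          unfold ed at h ⊢
          rw [if_neg (by omega)] at e1
          rw [if_pos (by omega)] at e2
          push_cast [e1, e2] at h ⊢; omega) (by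
          have e1 := hN (p - (n + 1 + 1)); have e2 := hN (p - (n + 1 + 1) + 1)
          rw [show p - 1 - ((n : ℤ) + 1) = p - (n + 1 + 1) by ring]
          unfold ed at h0 ⊢
          rw [if_neg (by omega)] at e1
          rw [if_neg (by omega)] at e2
          rw [e1, e2] at h0; simpa using h0)
      refine ⟨ν, Relation.ReflTransGen.head ⟨x, ⟨hx, μ', hν⟩, hν⟩ o, s.trans ?_, ?_⟩
      · rw [hν]; exact Finset.erase_subset _ _
      · intro c
        rw [hN, hc]
        split_ifs <;> omega
    · obtain ⟨ν, o, s, hc⟩ := ih μ (p - 1) h (by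
        rw [show p - 1 - ((n : ℤ) + 1) = p - (n + 1 + 1) by ring]; exact h0)
      obtain ⟨ν', x, hx, hr, hν⟩ := exists_rem ν p (by
          have e1 := hc (p - 1); have e2 := hc (p - 1 + 1)
          unfold ed at h ⊢
          rw [if_pos (by omega)] at e1
          rw [if_neg (by omega)] at e2
          push_cast [e1, e2] at h ⊢; omega) (by
          have e1 := hc p; have e2 := hc (p + 1)
          unfold ed at h1 ⊢
          rw [if_neg (by omega)] at e1
          rw [if_neg (by omega)] at e2
          rw [e1, e2] at h1; simpa using h1)
      obtain ⟨a, b⟩ := insert_of_erase hx hν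
      have hN := dN_insert a b
      rw [hr] at hN
      refine ⟨ν', Relation.ReflTransGen.tail o ⟨x, ⟨hx, ν', hν⟩, hν⟩, Finset.Subset.trans ?_ s, ?_⟩
      · rw [hν]; exact Finset.erase_subset _ _
      · intro c
        rw [hc, hN]
        split_ifs <;> omega

lemma core_ed {ℓ : ℕ} (hℓ : 2 ≤ ℓ) {μ : YoungDiagram} (h : IsCore ℓ μ) (p : ℤ)
    (hp : ed μ p = 1) : ed μ (p - ℓ) = 1 := by
  rcases ed_01 μ (p - ℓ) with h0 | h0
  swap
  · exact h0
  exfalso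
  obtain ⟨n, rfl⟩ : ∃ n, ℓ = n + 1 := ⟨ℓ - 1, by omega⟩
  push_cast at h0
  obtain ⟨ν, o, s, hc⟩ := ribbon n μ p hp h0
  have hfib : ∀ c, ((μ.cells \ ν.cells).filter (fun x => rsd x = c)).card =
      if p - (n + 1) < c ∧ c ≤ p then 1 else 0 := by
    intro c
    have := hc c
    unfold dN at this
    have e : (μ.cells \ ν.cells).filter (fun x => rsd x = c) =
        (μ.cells.filter (fun x => rsd x = c)) \ (ν.cells.filter (fun x => rsd x = c)) := by
      ext x; simp only [Finset.mem_filter, Finset.mem_sdiff]; tauto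
    rw [e, Finset.card_sdiff_of_subset (Finset.filter_subset_filter _ s)]
    omega
  have hmaps : ∀ x ∈ μ.cells \ ν.cells, rsd x ∈ Finset.Ioc (p - (n + 1)) p := by
    intro x hx
    have := hfib (rsd x)
    rw [Finset.mem_Ioc]
    by_contra hh
    rw [if_neg hh, Finset.card_eq_zero] at this
    have : x ∈ (∅ : Finset (ℕ × ℕ)) := by rw [← this]; simp [Finset.mem_filter] at hx ⊢; exact hx
    simp at this
  refine h ⟨ν, o, ?_, ?_⟩
  · rw [Finset.card_eq_sum_card_fiberwise hmaps, Finset.sum_congr rfl (g := fun _ => 1)]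
    · simp
    · intro c hcc
      rw [hfib, if_pos (Finset.mem_Ioc.1 hcc)]
  · intro x hx y hy hxy
    have hx' := hmaps x hx
    have hy' := hmaps y hy
    rw [Finset.mem_Ioc] at hx' hy'
    have hr : rsd x = rsd y := by
      unfold res at hxy
      rw [ZMod.intCast_eq_intCast_iff] at hxy
      have hd := hxy.dvd
      obtain ⟨k, hk⟩ := hd
      push_cast at hk
      have hk0 : k = 0 := by
        by_contra hk0
        rcases lt_or_gt_of_ne hk0 with h | h <;> nlinarith
      rw [hk0] at hk; omega
    have hle : ((μ.cells \ ν.cells).filter (fun z => rsd z = rsd y)).card ≤ 1 := by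
      rw [hfib]; split_ifs <;> simp
    rw [Finset.card_le_one] at hle
    exact hle x (Finset.mem_filter.2 ⟨hx, hr⟩) y (Finset.mem_filter.2 ⟨hy, rfl⟩)

/-! ### Sums over residue classes -/

lemma sum_dN {ℓ : ℕ} (μ : YoungDiagram) (F : Finset ℤ) (t : ℤ) (i : ZMod ℓ)
    (hF : ∀ x ∈ μ.cells, rsd x - t ∈ F) :
    ∑ c ∈ F.filter (fun c : ℤ => (c : ZMod ℓ) = i), (dN μ (c + t) : ℤ) = Res ℓ μ (i + t) := by
  unfold Res dN
  have hm : ∀ x ∈ μ.cells.filter (fun c => res ℓ c = i + t),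
      rsd x - t ∈ F.filter (fun c : ℤ => (c : ZMod ℓ) = i) := by
    intro x hx
    rw [Finset.mem_filter] at hx ⊢
    refine ⟨hF x hx.1, ?_⟩
    have := hx.2
    unfold res at this
    push_cast; rw [this]; ring
  rw [Finset.card_eq_sum_card_fiberwise hm]
  push_cast
  apply Finset.sum_congr rfl
  intro c hc
  rw [Finset.mem_filter] at hc
  congr 2
  ext x
  simp only [Finset.mem_filter]
  constructor
  · rintro ⟨h1, h2⟩
    refine ⟨⟨h1, ?_⟩, by omega⟩
    unfold res; rw [h2]; push_cast; rw [hc.2]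
  · rintro ⟨⟨h1, _⟩, h3⟩
    exact ⟨h1, by omega⟩

/-- A finite set of contents large enough for `μ`. -/
def supp (μ : YoungDiagram) : Finset ℤ :=
  {0} ∪ μ.cells.image (fun x => rsd x) ∪ μ.cells.image (fun x => rsd x - 1) ∪
    μ.cells.image (fun x => rsd x + 1)

lemma sum_ed {ℓ : ℕ} (μ : YoungDiagram) (i : ZMod ℓ) :
    ∑ c ∈ (supp μ).filter (fun c : ℤ => (c : ZMod ℓ) = i), (ed μ (c - 1) - ed μ c) =
      (if i = 0 then 1 else 0) + Res ℓ μ (i - 1) + Res ℓ μ (i + 1) - 2 * Res ℓ μ i := by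
  have h0 := sum_dN μ (supp μ) 0 i (by
    intro x hx; simp only [supp, Finset.mem_union, Finset.mem_image]
    exact Or.inl (Or.inl (Or.inr ⟨x, hx, by ring⟩)))
  have h1 := sum_dN μ (supp μ) 1 i (by
    intro x hx; simp only [supp, Finset.mem_union, Finset.mem_image]
    exact Or.inl (Or.inr ⟨x, hx, by ring⟩))
  have h2 := sum_dN μ (supp μ) (-1) i (by
    intro x hx; simp only [supp, Finset.mem_union, Finset.mem_image]
    exact Or.inr ⟨x, hx, by ring⟩)
  have h3 : ∑ c ∈ (supp μ).filter (fun c : ℤ => (c : ZMod ℓ) = i), (if c = 0 then (1 : ℤ) else 0) =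
      if i = 0 then 1 else 0 := by
    rw [Finset.sum_ite_eq']
    apply if_congr _ rfl rfl
    simp only [Finset.mem_filter, supp, Int.cast_zero]
    constructor
    · intro h; exact h.2.symm
    · intro h; exact ⟨by simp, h.symm⟩
  push_cast at h0 h1 h2
  rw [← sub_eq_add_neg] at h2
  simp only [add_zero] at h0
  rw [← h0, ← h1, ← h2, ← h3, Finset.mul_sum, ← Finset.sum_add_distrib, ← Finset.sum_add_distrib,
    ← Finset.sum_sub_distrib]
  apply Finset.sum_congr rfl
  intro c _
  unfold ed
  rw [sub_add_cancel, ← sub_eq_add_neg]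
  split_ifs <;> omega

lemma core_unique {ℓ : ℕ} (hℓ : 2 ≤ ℓ) {μ ν : YoungDiagram} (hμ : IsCore ℓ μ) (hν : IsCore ℓ ν)
    (k : ℤ) (h : ∀ i, Res ℓ μ i = Res ℓ ν i + k) : μ = ν := by
  have step : ∀ {κ : YoungDiagram}, IsCore ℓ κ → ∀ p, ed κ p = 1 → ∀ n : ℕ,
      ed κ (p - n * ℓ) = 1 := by
    intro κ hκ p hp n
    induction n with
    | zero => simpa using hp
    | succ n ih =>
      have := core_ed hℓ hκ _ ih
      rw [← this]; congr 1; push_cast; ring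
  have half : ∀ {μ ν : YoungDiagram}, IsCore ℓ μ → IsCore ℓ ν → ∀ k : ℤ,
      (∀ i, Res ℓ μ i = Res ℓ ν i + k) → ∀ p, ¬ (ed μ p = 1 ∧ ed ν p = 0) := by
    intro μ ν hμ hν k h p ⟨h1, h0⟩
    set F := supp μ ∪ supp ν ∪ {p} with hF
    set G := F.filter (fun c : ℤ => (c : ZMod ℓ) = (p : ZMod ℓ)) with hG
    have a0 := sum_dN (ℓ := ℓ) μ F 0 p (by
      intro x hx; simp only [hF, supp, Finset.mem_union, Finset.mem_image]
      exact Or.inl (Or.inl (Or.inl (Or.inl (Or.inr ⟨x, hx, by ring⟩)))))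
    have a1 := sum_dN (ℓ := ℓ) μ F 1 p (by
      intro x hx; simp only [hF, supp, Finset.mem_union, Finset.mem_image]
      exact Or.inl (Or.inl (Or.inl (Or.inr ⟨x, hx, by ring⟩))))
    have b0 := sum_dN (ℓ := ℓ) ν F 0 p (by
      intro x hx; simp only [hF, supp, Finset.mem_union, Finset.mem_image]
      exact Or.inl (Or.inr (Or.inl (Or.inl (Or.inr ⟨x, hx, by ring⟩)))))
    have b1 := sum_dN (ℓ := ℓ) ν F 1 p (by
      intro x hx; simp only [hF, supp, Finset.mem_union, Finset.mem_image]
      exact Or.inl (Or.inr (Or.inl (Or.inr ⟨x, hx, by ring⟩))))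
    have hsum : ∑ c ∈ G, (ed μ c - ed ν c) = 0 := by
      have : ∑ c ∈ G, (ed μ c - ed ν c) = ∑ c ∈ G, (((dN μ (c + 0) : ℤ) - dN μ (c + 1)) -
          ((dN ν (c + 0) : ℤ) - dN ν (c + 1))) := by
        apply Finset.sum_congr rfl
        intro c _
        unfold ed
        rw [add_zero]; ring
      rw [this, Finset.sum_sub_distrib, Finset.sum_sub_distrib, Finset.sum_sub_distrib,
        a0, a1, b0, b1, h, h]
      ring
    have hpos : 0 < ∑ c ∈ G, (ed μ c - ed ν c) := by
      apply Finset.sum_pos'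
      · intro c hc
        have hc2 := (Finset.mem_filter.1 hc).2
        rw [ZMod.intCast_eq_intCast_iff] at hc2
        obtain ⟨t, ht⟩ := hc2.dvd
        -- p - c = ℓ t
        rcases le_total 0 t with h' | h'
        · obtain ⟨n, rfl⟩ := Int.eq_ofNat_of_zero_le h'
          have := step hμ p h1 n
          rw [show p - n * ℓ = c by linarith] at this
          rcases ed_01 ν c with e | e <;> omega
        · obtain ⟨n, hn⟩ := Int.eq_ofNat_of_zero_le (neg_nonneg.2 h')
          have hc0 : ed ν c = 0 := by
            rcases ed_01 ν c with e | e
            · exact e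
            · have := step hν c e n
              rw [show c - n * ℓ = p by rw [← hn]; linarith] at this
              omega
          rcases ed_01 μ c with e | e <;> omega
      · exact ⟨p, by simp [hG, hF], by omega⟩
    omega
  have hed : ∀ p, ed μ p = ed ν p := by
    intro p
    have x1 := half hμ hν k h p
    have x2 := half hν hμ (-k) (fun i => by rw [h i]; ring) p
    rcases ed_01 μ p with e | e <;> rcases ed_01 ν p with e' | e' <;> omega
  apply dN_ext
  have hshift : ∀ (c : ℤ) (n : ℕ), (dN μ c : ℤ) - dN ν c = dN μ (c + n) - dN ν (c + n) := by
    intro c n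
    induction n with
    | zero => simp
    | succ n ih =>
      rw [ih]
      have := hed (c + n)
      unfold ed at this
      push_cast
      rw [← add_assoc]; linarith
  have hvan : ∀ κ : YoungDiagram, ∃ M : ℤ, ∀ c > M, dN κ c = 0 := by
    intro κ
    obtain ⟨M, hM⟩ := (κ.cells.image rsd).bddAbove
    refine ⟨M, fun c hc => ?_⟩
    unfold dN
    rw [Finset.card_eq_zero, Finset.filter_eq_empty_iff]
    intro x hx hxc
    have := hM (Finset.mem_coe.2 (Finset.mem_image_of_mem rsd hx))
    omega
  intro c
  obtain ⟨M, hM⟩ := hvan μ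
  obtain ⟨M', hM'⟩ := hvan ν
  obtain ⟨n, hn⟩ : ∃ n : ℕ, n = M.natAbs + M'.natAbs + c.natAbs + 1 := ⟨_, rfl⟩
  have := hshift c n
  rw [hM (c + n) (by omega), hM' (c + n) (by omega)] at this
  omega

/-! ### Processes -/

lemma obtainable_subset {μ ν : YoungDiagram} (h : Obtainable μ ν) : ν.cells ⊆ μ.cells := by
  induction h with
  | refl => exact Finset.Subset.refl _
  | tail _ h ih =>
    obtain ⟨c, _, hc⟩ := h
    rw [hc]; exact (Finset.erase_subset _ _).trans ih

lemma coreStep_Res {ℓ : ℕ} [NeZero ℓ] {μ ν : YoungDiagram} (h : CoreStep ℓ μ ν) (i : ZMod ℓ) :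
    Res ℓ μ i = Res ℓ ν i + 1 := by
  obtain ⟨o, hc, hinj⟩ := h
  have s := obtainable_subset o
  have himg : (μ.cells \ ν.cells).image (res ℓ) = Finset.univ := by
    apply Finset.eq_univ_of_card
    rw [Finset.card_image_of_injOn hinj, hc, ZMod.card]
  have h1 : ((μ.cells \ ν.cells).filter (fun x => res ℓ x = i)).card = 1 := by
    have hi : i ∈ (μ.cells \ ν.cells).image (res ℓ) := by rw [himg]; simp
    obtain ⟨x, hx, hxi⟩ := Finset.mem_image.1 hi
    rw [Finset.card_eq_one]
    refine ⟨x, ?_⟩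
    ext y
    rw [Finset.mem_filter, Finset.mem_singleton]
    constructor
    · rintro ⟨hy, hyi⟩; exact hinj hy hx (hyi.trans hxi.symm)
    · rintro rfl; exact ⟨hx, hxi⟩
  have e : (μ.cells \ ν.cells).filter (fun x => res ℓ x = i) =
      (μ.cells.filter (fun x => res ℓ x = i)) \ (ν.cells.filter (fun x => res ℓ x = i)) := by
    ext x; simp only [Finset.mem_filter, Finset.mem_sdiff]; tauto
  have s' := Finset.filter_subset_filter (fun x => res ℓ x = i) s
  rw [e, Finset.card_sdiff_of_subset s'] at h1
  have := Finset.card_le_card s'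
  unfold Res
  omega

lemma coreSteps_Res {ℓ : ℕ} [NeZero ℓ] {μ ν : YoungDiagram}
    (h : Relation.ReflTransGen (CoreStep ℓ) μ ν) :
    ∃ m : ℕ, ∀ i, Res ℓ μ i = Res ℓ ν i + m := by
  induction h with
  | refl => exact ⟨0, by simp⟩
  | tail _ h ih =>
    obtain ⟨m, hm⟩ := ih
    refine ⟨m + 1, fun i => ?_⟩
    rw [hm, coreStep_Res h]; push_cast; ring

lemma sum_Res {ℓ : ℕ} [NeZero ℓ] (μ : YoungDiagram) : ∑ i, Res ℓ μ i = μ.cells.card := by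
  unfold Res
  rw [Finset.card_eq_sum_card_fiberwise (f := res ℓ) (t := Finset.univ) (by simp)]
  push_cast; rfl

lemma card_of_Res {ℓ : ℕ} [NeZero ℓ] {μ ν : YoungDiagram} {m : ℤ}
    (h : ∀ i, Res ℓ μ i = Res ℓ ν i + m) :
    (μ.cells.card : ℤ) = ν.cells.card + ℓ * m := by
  rw [← sum_Res (ℓ := ℓ) μ, ← sum_Res (ℓ := ℓ) ν, Finset.sum_congr rfl (fun i _ => h i),
    Finset.sum_add_distrib]
  simp [ZMod.card]

lemma exists_core {ℓ : ℕ} [NeZero ℓ] (hℓ : 2 ≤ ℓ) (n : ℕ) : ∀ μ : YoungDiagram, μ.cells.card = n →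
    ∃ ν, ReachesCore ℓ μ ν := by
  induction n using Nat.strong_induction_on with
  | _ n ih =>
    intro μ hn
    by_cases h : IsCore ℓ μ
    · exact ⟨μ, Relation.ReflTransGen.refl, h⟩
    · unfold IsCore at h
      push Not at h
      obtain ⟨κ, h1, h2, h3⟩ := h
      have hs : CoreStep ℓ μ κ := ⟨h1, h2, h3⟩
      have := card_of_Res (coreStep_Res hs)
      obtain ⟨ν, hν⟩ := ih κ.cells.card (by omega) κ rfl
      exact ⟨ν, Relation.ReflTransGen.head hs hν.1, hν.2⟩

lemma reaches_of_Res {ℓ : ℕ} [NeZero ℓ] (hℓ : 2 ≤ ℓ) {lam ν : YoungDiagram} (hν : IsCore ℓ ν) (k : ℤ)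
    (h : ∀ i, Res ℓ lam i = Res ℓ ν i + k) : 0 ≤ k ∧ ReachesCore ℓ lam ν := by
  obtain ⟨κ, hκ⟩ := exists_core hℓ _ lam rfl
  obtain ⟨m, hm⟩ := coreSteps_Res hκ.1
  have : κ = ν := core_unique hℓ hκ.2 hν (k - m) (fun i => by have := hm i; have := h i; omega)
  subst this
  refine ⟨?_, hκ⟩
  have := hm 0
  have := h 0
  omega

lemma jsteps_Res {ℓ : ℕ} {J : Set (ZMod ℓ)} {μ ν : YoungDiagram}
    (h : Relation.ReflTransGen (JRemoveStep ℓ J) μ ν) :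
    ∃ c : ZMod ℓ → ℕ, (∀ j, c j ≠ 0 → j ∈ J) ∧ ∀ i, Res ℓ μ i = Res ℓ ν i + c i := by
  induction h with
  | refl => exact ⟨0, by simp, by simp⟩
  | tail _ h ih =>
    obtain ⟨c, hc, hm⟩ := ih
    obtain ⟨x, ⟨hx, hxJ⟩, he⟩ := h
    obtain ⟨a, b⟩ := insert_of_erase hx.1 he
    refine ⟨fun i => c i + if i = res ℓ x then 1 else 0, ?_, fun i => ?_⟩
    · intro j hj
      by_cases hjx : j = res ℓ x
      · rw [hjx]; exact hxJ
      · simp only [hjx, if_false, add_zero] at hj; exact hc j hj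
    · rw [hm, Res_insert a b]; push_cast; ring

lemma exists_peak {ℓ : ℕ} [NeZero ℓ] (β : ZMod ℓ → ℕ) (i₀ : ZMod ℓ) (h0 : β i₀ = 0)
    (hne : ∃ i, β i ≠ 0) : ∃ i, β i ≠ 0 ∧ (β (i - 1) : ℤ) + β (i + 1) < 2 * β i := by
  obtain ⟨m, -, hm⟩ := Finset.exists_max_image Finset.univ β ⟨i₀, Finset.mem_univ _⟩
  obtain ⟨t, ht⟩ := hne
  have hpos : β m ≠ 0 := by have := hm t (Finset.mem_univ _); omega
  by_contra hcon
  push Not at hcon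
  have step : ∀ n : ℕ, β (m + n) = β m := by
    intro n
    induction n with
    | zero => simp
    | succ n ih =>
      have h1 := hcon (m + n) (by omega)
      have h2 := hm (m + n - 1) (Finset.mem_univ _)
      have h3 := hm (m + n + 1) (Finset.mem_univ _)
      push_cast
      rw [← add_assoc]
      omega
  have := step (i₀ - m).val
  rw [ZMod.natCast_zmod_val, add_sub_cancel] at this
  omega

lemma build {ℓ : ℕ} [NeZero ℓ] {J : Set (ZMod ℓ)} {i₀ : ZMod ℓ} (hi₀ : i₀ ∉ J)
    {ν₁ ν₂ : YoungDiagram} (h₁J : IsJCore ℓ J ν₁) (k : ℤ) (n : ℕ) :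
    ∀ (lam : YoungDiagram) (β : ZMod ℓ → ℕ), ∑ i, β i = n → (∀ j, β j ≠ 0 → j ∈ J) →
      (∀ i, Res ℓ lam i + β i = Res ℓ ν₁ i + k) →
      Relation.ReflTransGen (JRemoveStep ℓ J) lam ν₂ →
      ∃ lam' : YoungDiagram, (∀ i, Res ℓ lam' i = Res ℓ ν₁ i + k) ∧
        Relation.ReflTransGen (JRemoveStep ℓ J) lam' ν₂ := by
  induction n with
  | zero =>
    intro lam β hs _ hR hJ
    refine ⟨lam, fun i => ?_, hJ⟩
    have : β i = 0 := by
      rw [Finset.sum_eq_zero_iff] at hs; exact hs i (Finset.mem_univ _)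
    have := hR i
    omega
  | succ n ih =>
    intro lam β hs hβ hR hJ
    obtain ⟨i, hi, hpk⟩ := exists_peak β i₀ (by by_contra h; exact hi₀ (hβ _ h)) (by
      by_contra h
      push Not at h
      simp [h] at hs)
    have hiJ := hβ i hi
    have e1 : 0 ≤ ∑ c ∈ (supp ν₁).filter (fun c : ℤ => (c : ZMod ℓ) = i),
        (ed ν₁ (c - 1) - ed ν₁ c) := by
      apply Finset.sum_nonneg
      intro c hc
      have hc2 := (Finset.mem_filter.1 hc).2
      by_contra hneg
      obtain ⟨ν, x, hx, hr, hν⟩ := exists_rem ν₁ c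
        (by rcases ed_01 ν₁ (c - 1) with a | a <;> rcases ed_01 ν₁ c with b | b <;> omega)
        (by rcases ed_01 ν₁ (c - 1) with a | a <;> rcases ed_01 ν₁ c with b | b <;> omega)
      refine h₁J x ⟨⟨hx, ν, hν⟩, ?_⟩
      unfold res; rw [hr, hc2]; exact hiJ
    rw [sum_ed] at e1
    have e2 : 0 < ∑ c ∈ (supp lam).filter (fun c : ℤ => (c : ZMod ℓ) = i),
        (ed lam (c - 1) - ed lam c) := by
      rw [sum_ed]
      have := hR (i - 1)
      have := hR i
      have := hR (i + 1)
      linarith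
    obtain ⟨c, hc, hpos⟩ := Finset.exists_lt_of_sum_lt (f := fun _ => (0 : ℤ))
      (lt_of_eq_of_lt Finset.sum_const_zero e2)
    have hc2 := (Finset.mem_filter.1 hc).2
    obtain ⟨ν, x, hx, hr, hν⟩ := exists_add lam c
        (by rcases ed_01 lam (c - 1) with a | a <;> rcases ed_01 lam c with b | b <;> omega)
        (by rcases ed_01 lam (c - 1) with a | a <;> rcases ed_01 lam c with b | b <;> omega)
    have hxi : res ℓ x = i := by unfold res; rw [hr, hc2]
    obtain ⟨hx', he⟩ := erase_of_insert hx hν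
    have hsplit : ∀ j, β j = (β j - if j = i then 1 else 0) + if j = i then 1 else 0 := by
      intro j
      split_ifs with h
      · subst h; omega
      · rfl
    refine ih ν (fun j => β j - if j = i then 1 else 0) ?_ ?_ ?_
      (Relation.ReflTransGen.head ⟨x, ⟨⟨hx', lam, he⟩, hxi ▸ hiJ⟩, he⟩ hJ)
    · rw [Finset.sum_congr rfl (fun j _ => hsplit j), Finset.sum_add_distrib] at hs
      simp only [Finset.sum_ite_eq', Finset.mem_univ, if_true] at hs
      omega
    · intro j hj
      apply hβ; intro h; apply hj; simp [h]
    · intro j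
      have a := hR j
      have b := hsplit j
      rw [Res_insert hx hν, hxi]
      split_ifs at b ⊢ <;> push_cast <;> omega

/-- Let `θ` be `J`-standard with `∑ θ_i ≠ 0`, let `ν₁, ν₂` be both
`ℓ`-cores and `J`-cores and `r₁, r₂ ∈ ℕ`.  Then `(Res_ℓ(ν₁) + r₁·δ_ℓ) - (Res_ℓ(ν₂) + r₂·δ_ℓ)`
is a nonnegative integer combination of the basis vectors `e_j`, `j ∈ J`, iff `r₁ ≥ r₂`
and there is a partition `λ` with `ℓ`-core `ν₁`, `|λ| = |ν₁| + ℓ(r₁ - r₂)` and `J`-core `ν₂`. -/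
theorem leaf_order_iff (ℓ : ℕ) [NeZero ℓ] (hℓ : 2 ≤ ℓ) (J : Set (ZMod ℓ))
    (θ : ZMod ℓ → ℂ) (hst : JStandard ℓ J θ) (ha : ∑ i : ZMod ℓ, θ i ≠ 0)
    (ν₁ ν₂ : YoungDiagram) (h₁ : IsCore ℓ ν₁) (h₁J : IsJCore ℓ J ν₁)
    (h₂ : IsCore ℓ ν₂) (h₂J : IsJCore ℓ J ν₂) (r₁ r₂ : ℕ) :
    (∃ c : ZMod ℓ → ℕ, (∀ j, c j ≠ 0 → j ∈ J) ∧
      ∀ i, (Res ℓ ν₁ i + (r₁ : ℤ) * delta ℓ i) - (Res ℓ ν₂ i + (r₂ : ℤ) * delta ℓ i)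
        = (c i : ℤ)) ↔
    (r₂ ≤ r₁ ∧ ∃ lam : YoungDiagram, ReachesCore ℓ lam ν₁ ∧
      lam.cells.card = ν₁.cells.card + ℓ * (r₁ - r₂) ∧ JReaches ℓ J lam ν₂) := by
  have hJ : ∃ i₀, i₀ ∉ J := by
    by_contra hcon
    push Not at hcon
    apply ha
    apply Finset.sum_eq_zero
    intro j _
    have hw : sPerm ℓ j ∈ WJ ℓ J := Subgroup.subset_closure ⟨j, hcon j, rfl⟩
    have hw' : sPerm ℓ j ∈ Wgrp ℓ := Subgroup.subset_closure ⟨j, rfl⟩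
    have := congrFun ((hst _ hw').2 hw) j
    have h2 : -θ j = θ j := by
      simpa [sPerm, sC] using this
    exact self_eq_neg.1 h2.symm
  obtain ⟨i₀, hi₀⟩ := hJ
  simp only [delta, mul_one]
  constructor
  · rintro ⟨c, hc, hR⟩
    obtain ⟨lam, hl, hlJ⟩ := build hi₀ h₁J ((r₁ : ℤ) - r₂) _ ν₂ c rfl hc
      (fun i => by have := hR i; linarith) Relation.ReflTransGen.refl
    obtain ⟨hk, hcore⟩ := reaches_of_Res hℓ h₁ _ hl
    have hle : r₂ ≤ r₁ := by omega
    refine ⟨hle, lam, hcore, ?_, hlJ, h₂J⟩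
    have := card_of_Res hl
    zify [hle]
    exact this
  · rintro ⟨hle, lam, hcore, hcard, hlJ, -⟩
    obtain ⟨c, hc, hR⟩ := jsteps_Res hlJ
    obtain ⟨m, hm⟩ := coreSteps_Res hcore.1
    refine ⟨c, hc, fun i => ?_⟩
    have hcm := card_of_Res hm
    have hmr : (m : ℤ) = r₁ - r₂ := by
      zify [hle] at hcard
      have h3 : (ℓ : ℤ) * m = ℓ * (r₁ - r₂) := by linarith
      exact mul_left_cancel₀ (by exact_mod_cast (NeZero.ne ℓ)) h3
    have := hR i
    have := hm i
    linarith

end CM
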